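/- arXiv:2112.11256 — 6 statements merged into one kernel-verified Lean document; each statement's English description precedes it below -/
import Mathlib

section
/- Let V be a real inner product space, N ≥ 1, K ≥ 1, let q = (q_1,…,q_N) with q_i > 0 for all i and ∑_{i=1}^N q_i = 1, let p_1,…,p_N be real numbers, let η > 0, let E ≥ 1 be an integer, and let G_1,…,G_N ≥ 0. Suppose Δ_1,…,Δ_N ∈ V satisfy ‖Δ_i‖ ≤ 2·η·E·G_i for all i. Then the sampling variance of the K-sample importance-weighted average is bounded as ∑_{s ∈ {1,…,N}^K} (∏_{k=1}^K q_{s_k}) · ‖ (1/K)·∑_{k=1}^K (p_{s_k}/q_{s_k})·Δ_{s_k} − ∑_{i=1}^N p_i·Δ_i ‖² ≤ (4/K) · ( ∑_{i=1}^N p_i² G_i² / q_i ) · (η·E)². -/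
lemma aux_step {V : Type*} [NormedAddCommGroup V] [InnerProductSpace ℝ V] {N : ℕ}
    (q : Fin N → ℝ) (hqsum : ∑ i, q i = 1) (Y : Fin N → V) (hY : ∑ i, q i • Y i = 0) (v : V) :
    ∑ i, q i * ‖v + Y i‖ ^ 2 = ‖v‖ ^ 2 + ∑ i, q i * ‖Y i‖ ^ 2 := by
  have h1 : ∑ i, q i * inner ℝ v (Y i) = 0 := by
    have : inner ℝ v (∑ i, q i • Y i) = 0 := by rw [hY, inner_zero_right]
    rw [inner_sum] at this
    simpa [inner_smul_right] using this
  calc ∑ i, q i * ‖v + Y i‖ ^ 2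
      = ∑ i, (q i * ‖v‖ ^ 2 + 2 * (q i * inner ℝ v (Y i)) + q i * ‖Y i‖ ^ 2) := by
        refine Finset.sum_congr rfl fun i _ => ?_
        rw [norm_add_sq_real]; ring
    _ = _ := by
        rw [Finset.sum_add_distrib, Finset.sum_add_distrib, ← Finset.sum_mul, ← Finset.mul_sum,
          h1, hqsum]; ring

lemma aux_var {V : Type*} [NormedAddCommGroup V] [InnerProductSpace ℝ V] {N : ℕ}
    (q : Fin N → ℝ) (hqsum : ∑ i, q i = 1) (Y : Fin N → V) (hY : ∑ i, q i • Y i = 0) (K : ℕ) :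
    ∀ v : V, ∑ s : Fin K → Fin N, (∏ k, q (s k)) * ‖v + ∑ k, Y (s k)‖ ^ 2
      = ‖v‖ ^ 2 + K * ∑ i, q i * ‖Y i‖ ^ 2 := by
  induction K with
  | zero => intro v; simp
  | succ K ih =>
    intro v
    rw [← (Fin.consEquiv (fun _ : Fin (K + 1) => Fin N)).sum_comp, Fintype.sum_prod_type]
    have : ∀ i : Fin N, ∑ s : Fin K → Fin N,
        (∏ k, q ((Fin.consEquiv (fun _ : Fin (K + 1) => Fin N)) (i, s) k)) *
          ‖v + ∑ k, Y ((Fin.consEquiv (fun _ : Fin (K + 1) => Fin N)) (i, s) k)‖ ^ 2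
        = q i * ‖v + Y i‖ ^ 2 + q i * (K * ∑ i, q i * ‖Y i‖ ^ 2) := by
      intro i
      rw [← mul_add, ← ih (v + Y i), Finset.mul_sum]
      refine Finset.sum_congr rfl fun s _ => ?_
      simp [Fin.consEquiv, Fin.prod_univ_succ, Fin.sum_univ_succ, mul_assoc, add_assoc]
    rw [Finset.sum_congr rfl fun i _ => this i, Finset.sum_add_distrib, ← Finset.sum_mul,
      aux_step q hqsum Y hY, hqsum]
    push_cast; ring

/-- Inequality (11) of Theorem 1: sampling variance of the `K`-sample
importance-weighted average under bounded local updates `‖Δ_i‖ ≤ 2ηE G_i`. -/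
theorem stmt_2 (V : Type*) [NormedAddCommGroup V] [InnerProductSpace ℝ V]
    (N K : ℕ) (hN : 1 ≤ N) (hK : 1 ≤ K)
    (q : Fin N → ℝ) (hq : ∀ i, 0 < q i) (hqsum : ∑ i, q i = 1)
    (p : Fin N → ℝ) (η : ℝ) (hη : 0 < η) (E : ℕ) (hE : 1 ≤ E)
    (G : Fin N → ℝ) (hG : ∀ i, 0 ≤ G i)
    (Δ : Fin N → V) (hΔ : ∀ i, ‖Δ i‖ ≤ 2 * η * (E : ℝ) * G i) :
    ∑ s : Fin K → Fin N, (∏ k, q (s k)) *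
        ‖(1 / (K : ℝ)) • (∑ k, (p (s k) / q (s k)) • Δ (s k)) - ∑ i, p i • Δ i‖ ^ 2
      ≤ (4 / (K : ℝ)) * (∑ i, p i ^ 2 * G i ^ 2 / q i) * (η * (E : ℝ)) ^ 2 := by
  have hK0 : (0 : ℝ) < K := by exact_mod_cast hK
  set μ : V := ∑ i, p i • Δ i with hμ
  set X : Fin N → V := fun i => (p i / q i) • Δ i with hX
  have hqX : ∑ i, q i • X i = μ := by
    refine Finset.sum_congr rfl fun i _ => ?_
    simp only [hX]
    rw [smul_smul, mul_div_cancel₀ _ (hq i).ne']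
  set Y : Fin N → V := fun i => X i - μ with hYdef
  have hY : ∑ i, q i • Y i = 0 := by
    simp only [hYdef, smul_sub, Finset.sum_sub_distrib, ← Finset.sum_smul, hqX, hqsum, one_smul,
      sub_self]
  have hv := aux_var q hqsum Y hY K 0
  have hs := aux_step q hqsum Y hY μ
  have hle : ∑ i, q i * ‖Y i‖ ^ 2 ≤ ∑ i, q i * ‖X i‖ ^ 2 := by
    have : ∑ i, q i * ‖X i‖ ^ 2 = ∑ i, q i * ‖μ + Y i‖ ^ 2 := by simp [hYdef]
    rw [this, hs]
    linarith [sq_nonneg ‖μ‖]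
  have hX2 : ∑ i, q i * ‖X i‖ ^ 2 ≤ 4 * (∑ i, p i ^ 2 * G i ^ 2 / q i) * (η * (E : ℝ)) ^ 2 := by
    rw [Finset.mul_sum, Finset.sum_mul]
    refine Finset.sum_le_sum fun i _ => ?_
    have h1 : ‖Δ i‖ ^ 2 ≤ (2 * η * (E : ℝ) * G i) ^ 2 :=
      pow_le_pow_left₀ (norm_nonneg _) (hΔ i) 2
    have hqi := hq i
    have h2 : q i * ‖X i‖ ^ 2 = (p i ^ 2 / q i) * ‖Δ i‖ ^ 2 := by
      simp only [hX]
      rw [norm_smul, mul_pow, Real.norm_eq_abs, sq_abs]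
      field_simp
    rw [h2]
    calc (p i ^ 2 / q i) * ‖Δ i‖ ^ 2 ≤ (p i ^ 2 / q i) * (2 * η * (E : ℝ) * G i) ^ 2 := by gcongr
      _ = _ := by ring
  have hterm : ∀ s : Fin K → Fin N,
      (∏ k, q (s k)) * ‖(1 / (K : ℝ)) • (∑ k, X (s k)) - μ‖ ^ 2
        = (1 / (K : ℝ)) ^ 2 * ((∏ k, q (s k)) * ‖0 + ∑ k, Y (s k)‖ ^ 2) := by
    intro s
    have : (1 / (K : ℝ)) • (∑ k, X (s k)) - μ = (1 / (K : ℝ)) • (0 + ∑ k, Y (s k)) := by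
      simp only [hYdef, Finset.sum_sub_distrib, zero_add, smul_sub, Finset.sum_const,
        Finset.card_univ, Fintype.card_fin]
      rw [← Nat.cast_smul_eq_nsmul ℝ, smul_smul, one_div_mul_cancel hK0.ne', one_smul]
    rw [this, norm_smul, mul_pow, Real.norm_eq_abs, sq_abs]
    ring
  change ∑ s : Fin K → Fin N,
      (∏ k, q (s k)) * ‖(1 / (K : ℝ)) • (∑ k, X (s k)) - μ‖ ^ 2 ≤ _
  rw [Finset.sum_congr rfl fun s _ => hterm s, ← Finset.mul_sum, hv]
  have h3 := hle.trans hX2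
  calc (1 / (K : ℝ)) ^ 2 * (‖(0 : V)‖ ^ 2 + K * ∑ i, q i * ‖Y i‖ ^ 2)
      = (1 / (K : ℝ)) * ∑ i, q i * ‖Y i‖ ^ 2 := by
        rw [norm_zero]; field_simp; ring
    _ ≤ (1 / (K : ℝ)) * (4 * (∑ i, p i ^ 2 * G i ^ 2 / q i) * (η * (E : ℝ)) ^ 2) := by gcongr
    _ = _ := by ring
end

section
/- Let N ≥ 1, let t_1,…,t_N > 0, p_1,…,p_N > 0, and G_1,…,G_N > 0. Define q*_i = ( p_i G_i / √(t_i) ) / ∑_{j=1}^N ( p_j G_j / √(t_j) ) for each i. Then q* lies in the open probability simplex (q*_i > 0 for all i and ∑_i q*_i = 1), it achieves ( ∑_{i=1}^N q*_i t_i ) · ( ∑_{i=1}^N p_i²G_i²/q*_i ) = ( ∑_{i=1}^N √(t_i) · p_i G_i )², and for every q = (q_1,…,q_N) with q_i > 0 for all i and ∑_{i=1}^N q_i = 1 it holds that ( ∑_{i=1}^N q*_i t_i ) · ( ∑_{i=1}^N p_i²G_i²/q*_i ) ≤ ( ∑_{i=1}^N q_i t_i ) · ( ∑_{i=1}^N p_i²G_i²/q_i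 ); that is, q* is a global minimizer of (∑_i q_i t_i)(∑_i p_i²G_i²/q_i) over the open probability simplex. -/
/-- Corollary 2: the sampling probabilities `q*_i = (p_iG_i/√t_i)/∑_j (p_jG_j/√t_j)`
lie in the open probability simplex, achieve the value `(∑_i √t_i · p_iG_i)²`, and
globally minimize `(∑_i q_i t_i)(∑_i p_i²G_i²/q_i)` over the open probability simplex. -/
theorem stmt_9 (N : ℕ) (hN : 1 ≤ N) (t p G : Fin N → ℝ)
    (ht : ∀ i, 0 < t i) (hp : ∀ i, 0 < p i) (hG : ∀ i, 0 < G i) :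
    (∀ i, 0 < (p i * G i / Real.sqrt (t i)) / ∑ j, p j * G j / Real.sqrt (t j)) ∧
    (∑ i, (p i * G i / Real.sqrt (t i)) / ∑ j, p j * G j / Real.sqrt (t j)) = 1 ∧
    (∑ i, ((p i * G i / Real.sqrt (t i)) / ∑ j, p j * G j / Real.sqrt (t j)) * t i) *
        (∑ i, p i ^ 2 * G i ^ 2 /
          ((p i * G i / Real.sqrt (t i)) / ∑ j, p j * G j / Real.sqrt (t j)))
      = (∑ i, Real.sqrt (t i) * (p i * G i)) ^ 2 ∧
    ∀ q : Fin N → ℝ, (∀ i, 0 < q i) → (∑ i, q i) = 1 →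
      (∑ i, ((p i * G i / Real.sqrt (t i)) / ∑ j, p j * G j / Real.sqrt (t j)) * t i) *
          (∑ i, p i ^ 2 * G i ^ 2 /
            ((p i * G i / Real.sqrt (t i)) / ∑ j, p j * G j / Real.sqrt (t j)))
        ≤ (∑ i, q i * t i) * (∑ i, p i ^ 2 * G i ^ 2 / q i) := by
  have hs : ∀ i, 0 < Real.sqrt (t i) := fun i => Real.sqrt_pos.mpr (ht i)
  have hsq : ∀ i, Real.sqrt (t i) ^ 2 = t i := fun i => Real.sq_sqrt (ht i).le
  have ha : ∀ i, 0 < p i * G i / Real.sqrt (t i) := fun i =>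
    div_pos (mul_pos (hp i) (hG i)) (hs i)
  have hS : 0 < ∑ j, p j * G j / Real.sqrt (t j) :=
    Finset.sum_pos (fun i _ => ha i) ⟨⟨0, hN⟩, Finset.mem_univ _⟩
  have hval : (∑ i, ((p i * G i / Real.sqrt (t i)) / ∑ j, p j * G j / Real.sqrt (t j)) * t i) *
        (∑ i, p i ^ 2 * G i ^ 2 /
          ((p i * G i / Real.sqrt (t i)) / ∑ j, p j * G j / Real.sqrt (t j)))
      = (∑ i, Real.sqrt (t i) * (p i * G i)) ^ 2 := by
    generalize (∑ j, p j * G j / Real.sqrt (t j)) = S at hS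
    have h1 : ∀ i, ((p i * G i / Real.sqrt (t i)) / S) * t i
        = Real.sqrt (t i) * (p i * G i) * S⁻¹ := by
      intro i
      have := (hs i).ne'
      nth_rewrite 2 [← hsq i]
      field_simp
    have h2 : ∀ i, p i ^ 2 * G i ^ 2 / ((p i * G i / Real.sqrt (t i)) / S)
        = Real.sqrt (t i) * (p i * G i) * S := by
      intro i
      have := (hs i).ne'
      have := (hp i).ne'
      have := (hG i).ne'
      field_simp
    simp only [h1, h2, ← Finset.sum_mul]
    field_simp
  refine ⟨fun i => div_pos (ha i) hS, ?_, hval, ?_⟩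
  · rw [← Finset.sum_div, div_self hS.ne']
  · intro q hq _
    rw [hval]
    apply Finset.sum_sq_le_sum_mul_sum_of_sq_eq_mul
    · intro i _
      exact (mul_pos (hq i) (ht i)).le
    · intro i _
      have := hq i
      positivity
    · intro i _
      have := (hq i).ne'
      rw [mul_pow, hsq i]
      field_simp
end

section
/- Let t_1, t_2 > 0, p_1, p_2 > 0, G_1, G_2 > 0, α > 0, and β ≥ 0. Then the function f : ℝ² → ℝ defined by f(q_1, q_2) = (q_1 t_1 + q_2 t_2) · ( α·( p_1²G_1²/q_1 + p_2²G_2²/q_2 ) + β ) is NOT convex on the open positive quadrant { (q_1, q_2) : q_1 > 0, q_2 > 0 }. -/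
/-- Theorem 3 (non-convexity of Problem P3) for `N = 2`: the objective
`f(q₁,q₂) = (q₁t₁ + q₂t₂)(α(p₁²G₁²/q₁ + p₂²G₂²/q₂) + β)` is not convex on the
open positive quadrant. -/
theorem stmt_10 (t₁ t₂ p₁ p₂ G₁ G₂ α β : ℝ)
    (ht₁ : 0 < t₁) (ht₂ : 0 < t₂) (hp₁ : 0 < p₁) (hp₂ : 0 < p₂)
    (hG₁ : 0 < G₁) (hG₂ : 0 < G₂) (hα : 0 < α) (hβ : 0 ≤ β) :
    ¬ ConvexOn ℝ {x : ℝ × ℝ | 0 < x.1 ∧ 0 < x.2}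
        (fun x : ℝ × ℝ =>
          (x.1 * t₁ + x.2 * t₂) *
            (α * (p₁ ^ 2 * G₁ ^ 2 / x.1 + p₂ ^ 2 * G₂ ^ 2 / x.2) + β)) := by
  intro h
  obtain ⟨A, hA⟩ : ∃ A, A = p₁ ^ 2 * G₁ ^ 2 := ⟨_, rfl⟩
  obtain ⟨B, hB⟩ : ∃ B, B = p₂ ^ 2 * G₂ ^ 2 := ⟨_, rfl⟩
  have hA0 : 0 < A := by rw [hA]; positivity
  have hB0 : 0 < B := by rw [hB]; positivity
  rw [← hA, ← hB] at h
  obtain ⟨M, hM⟩ : ∃ M, M = 2 + 4 * (B * t₁) / (A * t₂) := ⟨_, rfl⟩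
  have hM2 : 2 ≤ M := by
    rw [hM]
    have : 0 ≤ 4 * (B * t₁) / (A * t₂) := by positivity
    linarith
  have hM0 : 0 < M := by linarith
  have hAM : A * t₂ * M = 2 * (A * t₂) + 4 * (B * t₁) := by
    rw [hM]; field_simp
  -- expanded form of the objective
  have key : ∀ x y : ℝ, 0 < x → 0 < y →
      (x * t₁ + y * t₂) * (α * (A / x + B / y) + β) =
        α * (A * t₁ + B * t₂) + α * (A * t₂ * (y / x) + B * t₁ * (x / y))
          + β * (x * t₁ + y * t₂) := by
    intro x y hx hy
    field_simp
    ring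
  have m1 : ((1, 1) : ℝ × ℝ) ∈ {x : ℝ × ℝ | 0 < x.1 ∧ 0 < x.2} := by simp
  have m2 : ((3, 3 * M) : ℝ × ℝ) ∈ {x : ℝ × ℝ | 0 < x.1 ∧ 0 < x.2} := by simp [hM0]
  have hc := h.2 m1 m2 (show (0 : ℝ) ≤ 1 / 2 by norm_num)
    (show (0 : ℝ) ≤ 1 / 2 by norm_num) (by norm_num)
  simp only [Prod.smul_mk, Prod.mk_add_mk, smul_eq_mul] at hc
  rw [key _ _ (by norm_num) (by positivity), key _ _ one_pos one_pos,
    key _ _ (by norm_num) (by positivity)] at hc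
  have e1 : (1 / 2 * 1 + 1 / 2 * (3 * M)) / (1 / 2 * 1 + 1 / 2 * 3) = (1 + 3 * M) / 4 := by
    ring
  have e2 : 3 * M / 3 = M := by ring
  have e3 : 3 / (3 * M) ≤ 1 := by
    rw [div_le_one (by positivity)]; linarith
  have e4 : 0 ≤ (1 / 2 * 1 + 1 / 2 * 3) / (1 / 2 * 1 + 1 / 2 * (3 * M)) := by positivity
  rw [e1, e2] at hc
  generalize 3 / (3 * M) = r at hc e3
  generalize (1 / 2 * 1 + 1 / 2 * 3) / (1 / 2 * 1 + 1 / 2 * (3 * M)) = w at hc e4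
  have hbt : 0 < B * t₁ := by positivity
  have hat : 0 < A * t₂ := by positivity
  have f1 : 0 ≤ B * t₁ * w := by positivity
  have f2 : B * t₁ * r ≤ B * t₁ := by nlinarith
  have f3 : α * (A * t₂ * ((1 + 3 * M) / 4) + B * t₁ * w) ≤
      α * ((A * t₂ * (1 / 1) + B * t₁ * (1 / 1)) / 2 + (A * t₂ * M + B * t₁ * r) / 2) := by
    linarith
  have f4 := le_of_mul_le_mul_left f3 hα
  linarith
end

section
/- Let N ≥ 2, let t_1,…,t_N ≥ 0, p_1,…,p_N ≥ 0, G_1,…,G_N ≥ 0, α ≥ 0, β ≥ 0, and let q = (q_1,…,q_N) with q_k > 0 for all k. Define g(q) = ( ∑_{k=1}^N q_k t_k ) · ( α ∑_{k=1}^N p_k²G_k²/q_k + β ). Suppose i ≠ j are indices with t_i ≤ t_j, p_i G_i ≥ p_j G_j, and q_i ≤ q_j, and let q' be obtained from q by swapping coordinates i and j (q'_i = q_j, q'_j = q_i, and q'_k = q_k for k ∉ {i,j}). Then g(q') ≤ g(q). -/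
theorem sum_swap_le_aux {N : ℕ} (a b : Fin N → ℝ) (i j : Fin N) (hij : i ≠ j)
    (h : 0 ≤ (a i - a j) * (b i - b j)) :
    ∑ k, a k * b (Equiv.swap i j k) ≤ ∑ k, a k * b k := by
  have key : ∀ f : Fin N → ℝ,
      ∑ k, f k = f i + (f j + ∑ k ∈ (Finset.univ.erase i).erase j, f k) := by
    intro f
    rw [Finset.add_sum_erase _ f (by simp [hij.symm]), Finset.add_sum_erase _ f (by simp)]
  rw [key, key (fun k => a k * b k)]
  have e : ∑ k ∈ (Finset.univ.erase i).erase j, a k * b (Equiv.swap i j k)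
      = ∑ k ∈ (Finset.univ.erase i).erase j, a k * b k := by
    apply Finset.sum_congr rfl
    intro k hk
    simp only [Finset.mem_erase] at hk
    rw [Equiv.swap_apply_of_ne_of_ne hk.2.1 hk.1]
  rw [e, Equiv.swap_apply_left, Equiv.swap_apply_right]
  linarith

/-- Exchange argument in Theorem 4 (non-strict form): if client `i` is no slower
(`t_i ≤ t_j`) and at least as statistically important (`p_iG_i ≥ p_jG_j`) but sampled
with at most the probability of client `j`, swapping the two sampling probabilities
does not increase the Problem P3 objective
`g(q) = (∑_k q_k t_k)(α ∑_k p_k²G_k²/q_k + β)`. -/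
theorem stmt_11 (N : ℕ) (hN : 2 ≤ N) (t p G : Fin N → ℝ)
    (ht : ∀ k, 0 ≤ t k) (hp : ∀ k, 0 ≤ p k) (hG : ∀ k, 0 ≤ G k)
    (α β : ℝ) (hα : 0 ≤ α) (hβ : 0 ≤ β)
    (q : Fin N → ℝ) (hq : ∀ k, 0 < q k)
    (i j : Fin N) (hij : i ≠ j)
    (htij : t i ≤ t j) (hpg : p i * G i ≥ p j * G j) (hqij : q i ≤ q j) :
    (∑ k, q (Equiv.swap i j k) * t k) *
        (α * ∑ k, p k ^ 2 * G k ^ 2 / q (Equiv.swap i j k) + β)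
      ≤ (∑ k, q k * t k) * (α * ∑ k, p k ^ 2 * G k ^ 2 / q k + β) := by
  have h1 : ∑ k, q (Equiv.swap i j k) * t k ≤ ∑ k, q k * t k := by
    have := sum_swap_le_aux t q i j hij
      (mul_nonneg_of_nonpos_of_nonpos (by linarith) (by linarith))
    simpa only [mul_comm] using this
  have h2 : ∑ k, p k ^ 2 * G k ^ 2 / q (Equiv.swap i j k)
      ≤ ∑ k, p k ^ 2 * G k ^ 2 / q k := by
    have hs : (p j * G j) ^ 2 ≤ (p i * G i) ^ 2 :=
      pow_le_pow_left₀ (mul_nonneg (hp j) (hG j)) hpg 2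
    have hi : (q j)⁻¹ ≤ (q i)⁻¹ := inv_anti₀ (hq i) hqij
    have := sum_swap_le_aux (fun k => p k ^ 2 * G k ^ 2) (fun k => (q k)⁻¹) i j hij
      (mul_nonneg (by simp only [← mul_pow]; linarith) (by linarith))
    simpa only [div_eq_mul_inv] using this
  have h3 : 0 ≤ ∑ k, q k * t k :=
    Finset.sum_nonneg fun k _ => mul_nonneg (hq k).le (ht k)
  have h4 : 0 ≤ ∑ k, p k ^ 2 * G k ^ 2 / q (Equiv.swap i j k) :=
    Finset.sum_nonneg fun k _ => div_nonneg (by positivity) (hq _).le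
  have h5 := mul_le_mul_of_nonneg_left h2 hα
  exact mul_le_mul h1 (by linarith) (add_nonneg (mul_nonneg hα h4) hβ) h3
end

section
/- Let N ≥ 2, let t_1,…,t_N > 0, p_1,…,p_N > 0, G_1,…,G_N > 0, α > 0, β ≥ 0, and let q = (q_1,…,q_N) with q_k > 0 for all k. Define g(q) = ( ∑_{k=1}^N q_k t_k ) · ( α ∑_{k=1}^N p_k²G_k²/q_k + β ). Suppose i ≠ j are indices with t_i ≤ t_j, p_i G_i ≥ p_j G_j, q_i < q_j, and additionally either t_i < t_j or p_i G_i > p_j G_j. Let q' be obtained from q by swapping coordinates i and j (q'_i = q_j, q'_j = q_i, and q'_k = q_k for k ∉ {i,j}). Then g(q') < g(q). -/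
theorem swap_sum_aux (N : ℕ) (f a : Fin N → ℝ) (i j : Fin N) (hij : i ≠ j) :
    ∑ k, f (Equiv.swap i j k) * a k = ∑ k, f k * a k + (f j - f i) * (a i - a j) := by
  have h : ∑ k, (f (Equiv.swap i j k) * a k - f k * a k)
      = (f j - f i) * (a i - a j) := by
    rw [Fintype.sum_eq_add i j hij]
    · simp only [Equiv.swap_apply_left, Equiv.swap_apply_right]
      ring
    · rintro x ⟨hx, hy⟩
      rw [Equiv.swap_apply_of_ne_of_ne hx hy]
      ring
  rw [Finset.sum_sub_distrib] at h
  linarith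

/-- Exchange argument in Theorem 4 (strict form): if client `i` is no slower and at
least as statistically important as client `j`, with strictness in at least one of the
two comparisons, yet sampled with strictly smaller probability, then swapping the two
sampling probabilities strictly decreases the Problem P3 objective
`g(q) = (∑_k q_k t_k)(α ∑_k p_k²G_k²/q_k + β)`. -/
theorem stmt_12 (N : ℕ) (hN : 2 ≤ N) (t p G : Fin N → ℝ)
    (ht : ∀ k, 0 < t k) (hp : ∀ k, 0 < p k) (hG : ∀ k, 0 < G k)
    (α β : ℝ) (hα : 0 < α) (hβ : 0 ≤ β)
    (q : Fin N → ℝ) (hq : ∀ k, 0 < q k)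
    (i j : Fin N) (hij : i ≠ j)
    (htij : t i ≤ t j) (hpg : p i * G i ≥ p j * G j) (hqij : q i < q j)
    (hstrict : t i < t j ∨ p i * G i > p j * G j) :
    (∑ k, q (Equiv.swap i j k) * t k) *
        (α * ∑ k, p k ^ 2 * G k ^ 2 / q (Equiv.swap i j k) + β)
      < (∑ k, q k * t k) * (α * ∑ k, p k ^ 2 * G k ^ 2 / q k + β) := by
  have e1 := swap_sum_aux N q t i j hij
  have e2 := swap_sum_aux N (fun k => (q k)⁻¹) (fun k => p k ^ 2 * G k ^ 2) i j hij
  have c1 : ∀ k, p k ^ 2 * G k ^ 2 / q (Equiv.swap i j k)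
      = (q (Equiv.swap i j k))⁻¹ * (p k ^ 2 * G k ^ 2) := fun k => by
    rw [div_eq_mul_inv, mul_comm]
  have c2 : ∀ k, p k ^ 2 * G k ^ 2 / q k
      = (q k)⁻¹ * (p k ^ 2 * G k ^ 2) := fun k => by
    rw [div_eq_mul_inv, mul_comm]
  simp only [c1, c2]
  have hne : (Finset.univ : Finset (Fin N)).Nonempty := ⟨i, Finset.mem_univ i⟩
  have A' : 0 < ∑ k, q (Equiv.swap i j k) * t k :=
    Finset.sum_pos (fun k _ => mul_pos (hq _) (ht k)) hne
  have A : 0 < ∑ k, q k * t k :=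
    Finset.sum_pos (fun k _ => mul_pos (hq _) (ht k)) hne
  have B' : 0 < ∑ k, (q (Equiv.swap i j k))⁻¹ * (p k ^ 2 * G k ^ 2) :=
    Finset.sum_pos (fun k _ => mul_pos (inv_pos.2 (hq _))
      (mul_pos (pow_pos (hp k) 2) (pow_pos (hG k) 2))) hne
  have hinv : (q j)⁻¹ < (q i)⁻¹ := inv_strictAnti₀ (hq i) hqij
  have pj : 0 < p j * G j := mul_pos (hp j) (hG j)
  have hsq : p j ^ 2 * G j ^ 2 ≤ p i ^ 2 * G i ^ 2 := by
    rw [← mul_pow, ← mul_pow]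
    exact pow_le_pow_left₀ pj.le hpg 2
  have l1 : ∑ k, q (Equiv.swap i j k) * t k ≤ ∑ k, q k * t k := by
    rw [e1]
    nlinarith
  have l2 : ∑ k, (q (Equiv.swap i j k))⁻¹ * (p k ^ 2 * G k ^ 2)
      ≤ ∑ k, (q k)⁻¹ * (p k ^ 2 * G k ^ 2) := by
    rw [e2]
    nlinarith
  have hB : 0 < α * ∑ k, (q (Equiv.swap i j k))⁻¹ * (p k ^ 2 * G k ^ 2) + β :=
    add_pos_of_pos_of_nonneg (mul_pos hα B') hβ
  have l3 := mul_le_mul_of_nonneg_left l2 hα.le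
  rcases hstrict with h | h
  · have s1 : ∑ k, q (Equiv.swap i j k) * t k < ∑ k, q k * t k := by
      rw [e1]
      nlinarith [mul_pos (sub_pos.2 hqij) (sub_pos.2 h)]
    exact mul_lt_mul s1 (by linarith) hB A.le
  · have hs : p j ^ 2 * G j ^ 2 < p i ^ 2 * G i ^ 2 := by
      rw [← mul_pow, ← mul_pow]
      exact pow_lt_pow_left₀ h pj.le two_ne_zero
    have s2 : ∑ k, (q (Equiv.swap i j k))⁻¹ * (p k ^ 2 * G k ^ 2)
        < ∑ k, (q k)⁻¹ * (p k ^ 2 * G k ^ 2) := by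
      rw [e2]
      nlinarith [mul_pos (sub_pos.2 hinv) (sub_pos.2 hs)]
    have s3 := mul_lt_mul_of_pos_left s2 hα
    exact mul_lt_mul' l1 (by linarith) hB.le A
end

section
/- Let N ≥ 2, let t_1,…,t_N > 0, p_1,…,p_N > 0, G_1,…,G_N > 0, α > 0, β ≥ 0. Define g(q) = ( ∑_{k=1}^N q_k t_k ) · ( α ∑_{k=1}^N p_k²G_k²/q_k + β ) on the open probability simplex D = { q ∈ ℝ^N : q_k > 0 for all k, ∑_{k=1}^N q_k = 1 }. Suppose q* ∈ D is a global minimizer of g on D, i.e., g(q*) ≤ g(q) for all q ∈ D. Then for any two indices i and j with t_i ≤ t_j and p_i G_i ≥ p_j G_j, it holds that q*_i ≥ q*_j. -/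
/-- Theorem 4: any global minimizer `q*` of the Problem P3 objective
`g(q) = (∑_k q_k t_k)(α ∑_k p_k²G_k²/q_k + β)` over the open probability simplex
allocates probabilities monotonically: if `t_i ≤ t_j` and `p_iG_i ≥ p_jG_j`, then
`q*_i ≥ q*_j`. -/
theorem stmt_13 (N : ℕ) (hN : 2 ≤ N) (t p G : Fin N → ℝ)
    (ht : ∀ k, 0 < t k) (hp : ∀ k, 0 < p k) (hG : ∀ k, 0 < G k)
    (α β : ℝ) (hα : 0 < α) (hβ : 0 ≤ β)
    (qs : Fin N → ℝ) (hqs : ∀ k, 0 < qs k) (hqssum : ∑ k, qs k = 1)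
    (hmin : ∀ q : Fin N → ℝ, (∀ k, 0 < q k) → (∑ k, q k) = 1 →
      (∑ k, qs k * t k) * (α * ∑ k, p k ^ 2 * G k ^ 2 / qs k + β)
        ≤ (∑ k, q k * t k) * (α * ∑ k, p k ^ 2 * G k ^ 2 / q k + β))
    (i j : Fin N) (htij : t i ≤ t j) (hpg : p i * G i ≥ p j * G j) :
    qs i ≥ qs j := by
  by_contra hlt
  have hlt : qs i < qs j := lt_of_not_ge hlt
  have hij : i ≠ j := fun h => by rw [h] at hlt; exact lt_irrefl _ hlt
  have hi := hqs i
  have hj := hqs j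
  obtain ⟨m, hm⟩ : ∃ m, m = (qs i + qs j) / 2 := ⟨_, rfl⟩
  have hm0 : 0 < m := by linarith
  obtain ⟨q, hq⟩ : ∃ q : Fin N → ℝ, q = fun k => if k = i ∨ k = j then m else qs k := ⟨_, rfl⟩
  have hqi : q i = m := by simp [hq]
  have hqj : q j = m := by simp [hq]
  have hqk : ∀ k, k ≠ i ∧ k ≠ j → q k = qs k := by
    intro k hk
    simp [hq, hk.1, hk.2]
  have hqpos : ∀ k, 0 < q k := by
    intro k
    rw [hq]
    dsimp only
    split_ifs
    · exact hm0
    · exact hqs k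
  have key : ∀ F : Fin N → ℝ → ℝ,
      ∑ k, F k (q k) - ∑ k, F k (qs k) = (F i m - F i (qs i)) + (F j m - F j (qs j)) := by
    intro F
    rw [← Finset.sum_sub_distrib, Fintype.sum_eq_add i j hij, hqi, hqj]
    intro k hk
    rw [hqk k hk, sub_self]
  have h1 := key (fun _ x => x)
  have h2 := key (fun k x => x * t k)
  have h3 := key (fun k x => p k ^ 2 * G k ^ 2 / x)
  have hmin' := hmin q hqpos (by linarith)
  have hT : ∑ k, q k * t k ≤ ∑ k, qs k * t k := by
    have : (qs j - qs i) * (t i - t j) ≤ 0 :=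
      mul_nonpos_of_nonneg_of_nonpos (by linarith) (by linarith)
    rw [hm] at h2
    nlinarith
  have hTpos : 0 < ∑ k, q k * t k :=
    Finset.sum_pos (fun k _ => mul_pos (hqpos k) (ht k)) ⟨i, Finset.mem_univ i⟩
  have ha : p j ^ 2 * G j ^ 2 ≤ p i ^ 2 * G i ^ 2 := by
    rw [← mul_pow, ← mul_pow]
    exact pow_le_pow_left₀ (mul_pos (hp j) (hG j)).le hpg 2
  have haj : 0 < p j ^ 2 * G j ^ 2 := by
    have := hp j
    have := hG j
    positivity
  have hS : ∑ k, p k ^ 2 * G k ^ 2 / q k < ∑ k, p k ^ 2 * G k ^ 2 / qs k := by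
    generalize p j ^ 2 * G j ^ 2 = b at *
    generalize p i ^ 2 * G i ^ 2 = a at *
    have e1 : 0 ≤ (a - b) * (1 / qs i - 1 / m) :=
      mul_nonneg (by linarith)
        (sub_nonneg.2 (one_div_le_one_div_of_le hi (by linarith)))
    have e2 : 0 < 1 / qs i + 1 / qs j - 2 / m := by
      have : 1 / qs i + 1 / qs j - 2 / m
          = (qs j - qs i) ^ 2 / (qs i * qs j * (qs i + qs j)) := by
        rw [hm]
        field_simp
        ring
      rw [this]
      have : 0 < qs j - qs i := by linarith
      positivity
    have e3 := mul_pos haj e2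
    have e4 : a / m - a / qs i + (b / m - b / qs j)
        = -((a - b) * (1 / qs i - 1 / m)) - b * (1 / qs i + 1 / qs j - 2 / m) := by
      ring
    linarith
  have hSpos : 0 < ∑ k, p k ^ 2 * G k ^ 2 / qs k := by
    refine lt_of_le_of_lt (Finset.sum_nonneg fun k _ => ?_) hS
    have := hqpos k
    positivity
  have f1 := mul_lt_mul_of_pos_left
    (add_lt_add_left (mul_lt_mul_of_pos_left hS hα) β) hTpos
  have f2 := mul_le_mul_of_nonneg_right hT
    (add_nonneg (mul_pos hα hSpos).le hβ)
  linarith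
end
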